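/- Let (S,d) be a geodesic δ-hyperbolic metric space with basepoint e and let x,y be two distinct points of the Gromov boundary ∂S. Then for every R > 0 there exists K > 0 such that for every u₁,u₂ ∈ U_K(x), every v₁,v₂ ∈ U_K(y), and all geodesic segments [u₁,u₂] and [v₁,v₂], one has d([u₁,u₂],[v₁,v₂]) > R. -/

import Mathlib

/-! Slim triangles give the four-point inequality for Gromov products
`(u·w) ≥ min (u·v) (v·w) - 3D` for any `D > δ` (`gprod_ge_min`). It rests on the fact that the
distance from `e` to a geodesic `[u,v]` equals `(u·v)_e` up to `2D`: the lower bound is the triangle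
inequality, and the upper bound (`exists_near_basepoint`) comes from a point of `[u,v]` close to
both other sides of the triangle `u, v, e`, which exists because `[u,v]` is connected.

A point `a` of a geodesic `[u₁,u₂]` satisfies `(a·u₁) ≥ (u₁·u₂)`. Hence if `u₁, u₂ ∈ U_K(x)`
and `s` represents `x`, then `(a·sₙ) ≥ K - 6D` for large `n` (`geodesic_near_boundary`);
similarly `(b·tₙ) ≥ K - 6D` for `b ∈ [v₁,v₂]` and `t` representing `y`. If `d(a,b) ≤ R`, the product
`(a·b)` is at least `K - 3D - R`, and so `(sₙ·tₙ) ≥ K - 12D - R` for all large `n`. Since `x ≠ y`,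
the products `(sₙ·tₙ)` are below some fixed `M` for infinitely many `n`, which is impossible
once `K ≥ M + 12D + R`. -/

/-- A geodesic segment from `u` to `v`: the image of an isometric embedding of
`[0, dist u v]` sending the endpoints to `u` and `v`. -/
def IsGeodesicSegment {S : Type*} [MetricSpace S] (Γ : Set S) (u v : S) : Prop :=
  ∃ γ : ℝ → S, γ 0 = u ∧ γ (dist u v) = v ∧
    (∀ s ∈ Set.Icc (0 : ℝ) (dist u v), ∀ t ∈ Set.Icc (0 : ℝ) (dist u v),
      dist (γ s) (γ t) = |s - t|) ∧
    Γ = γ '' Set.Icc (0 : ℝ) (dist u v)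

/-- A geodesic metric space: every pair of points is joined by a geodesic segment. -/
def GeodesicSpace (S : Type*) [MetricSpace S] : Prop :=
  ∀ u v : S, ∃ Γ : Set S, IsGeodesicSegment Γ u v

/-- `δ`-hyperbolicity: every geodesic triangle is `δ`-slim. -/
def DeltaHyperbolic (S : Type*) [MetricSpace S] (δ : ℝ) : Prop :=
  ∀ x y z : S, ∀ Γ₁ Γ₂ Γ₃ : Set S,
    IsGeodesicSegment Γ₁ x y → IsGeodesicSegment Γ₂ y z → IsGeodesicSegment Γ₃ z x →
    ∀ p ∈ Γ₁, Metric.infDist p (Γ₂ ∪ Γ₃) ≤ δ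

/-- The Gromov product of `x` and `y` with respect to the basepoint `e`. -/
noncomputable def gprod {S : Type*} [MetricSpace S] (e x y : S) : ℝ :=
  (dist x e + dist y e - dist x y) / 2

/-- A sequence converges to infinity if its pairwise Gromov products tend to infinity. -/
def ConvToInfty {S : Type*} [MetricSpace S] (e : S) (s : ℕ → S) : Prop :=
  Filter.Tendsto (fun p : ℕ × ℕ => gprod e (s p.1) (s p.2)) Filter.atTop Filter.atTop

/-- The type of sequences in `S` converging to infinity. -/
def BSeq (S : Type*) [MetricSpace S] (e : S) := {s : ℕ → S // ConvToInfty e s}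

/-- Two sequences converging to infinity are equivalent if their mutual Gromov
products tend to infinity. -/
def bequiv {S : Type*} [MetricSpace S] (e : S) (s t : BSeq S e) : Prop :=
  Filter.Tendsto (fun n => gprod e (s.1 n) (t.1 n)) Filter.atTop Filter.atTop

/-- The Gromov boundary of `S` with respect to the basepoint `e`. -/
def GBoundary (S : Type*) [MetricSpace S] (e : S) := Quot (bequiv (S := S) e)

/-- A sequence in `S` tends to the boundary point `x`. -/
def TendstoBd {S : Type*} [MetricSpace S] (e : S) (s : ℕ → S) (x : GBoundary S e) : Prop :=
  ∃ h : ConvToInfty e s, Quot.mk _ (⟨s, h⟩ : BSeq S e) = x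

/-- The Gromov product of a point `u ∈ S` with a boundary point `x`:
the infimum over sequences tending to `x` of the liminf of Gromov products. -/
noncomputable def gprodSB {S : Type*} [MetricSpace S] (e u : S) (x : GBoundary S e) : EReal :=
  sInf {r : EReal | ∃ s : ℕ → S, TendstoBd e s x ∧
    r = Filter.liminf (fun n => (gprod e u (s n) : EReal)) Filter.atTop}

/-- The Gromov product of two boundary points. -/
noncomputable def gprodBB {S : Type*} [MetricSpace S] (e : S) (x y : GBoundary S e) : EReal :=
  sInf {r : EReal | ∃ s t : ℕ → S, TendstoBd e s x ∧ TendstoBd e t y ∧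
    r = Filter.liminf (fun p : ℕ × ℕ => (gprod e (s p.1) (t p.2) : EReal)) Filter.atTop}

/-- `UK e K x = {s ∈ S | (x·s)_e > K}`. -/
def UK {S : Type*} [MetricSpace S] (e : S) (K : ℝ) (x : GBoundary S e) : Set S :=
  {u : S | (K : EReal) < gprodSB e u x}

/-- `d'(x,y) = exp (−ζ (x·y)_e)` on the boundary (equal to `0` when the product is `∞`). -/
noncomputable def dExp {S : Type*} [MetricSpace S] (e : S) (ζ : ℝ) (x y : GBoundary S e) : ℝ :=
  if gprodBB e x y = ⊤ then 0 else Real.exp (-ζ * (gprodBB e x y).toReal)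

/-- The chain metric `ρ(x,y) = inf Σ d'(s_k, s_{k+1})` over finite chains from `x` to `y`. -/
noncomputable def rhoChain {S : Type*} [MetricSpace S] (e : S) (ζ : ℝ)
    (x y : GBoundary S e) : ℝ :=
  sInf {r : ℝ | ∃ (n : ℕ) (c : ℕ → GBoundary S e), c 0 = x ∧ c n = y ∧
    r = ∑ k ∈ Finset.range n, dExp e ζ (c k) (c (k + 1))}

/-- `ρ` is a metric. -/
def IsMetricFn {B : Type*} (ρ : B → B → ℝ) : Prop :=
  (∀ x y, 0 ≤ ρ x y) ∧ (∀ x y, ρ x y = 0 ↔ x = y) ∧ (∀ x y, ρ x y = ρ y x) ∧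
  ∀ x y z, ρ x z ≤ ρ x y + ρ y z

/-- `ζ` is a suitable visual parameter: `ζ > 0`, the associated chain function `ρ` is a
metric on the boundary, and `d'/2 ≤ ρ ≤ d'`. -/
def VisualParam {S : Type*} [MetricSpace S] (e : S) (ζ : ℝ) : Prop :=
  0 < ζ ∧ IsMetricFn (rhoChain e ζ) ∧
  ∀ x y : GBoundary S e, dExp e ζ x y / 2 ≤ rhoChain e ζ x y ∧ rhoChain e ζ x y ≤ dExp e ζ x y

/-- The topology on the Gromov boundary induced by the visual metric `ρ`. -/
noncomputable def bdTopology (S : Type*) [MetricSpace S] (e : S) (ζ : ℝ) :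
    TopologicalSpace (GBoundary S e) :=
  TopologicalSpace.generateFrom
    {B | ∃ (x : GBoundary S e) (ε : ℝ), 0 < ε ∧ B = {y | rhoChain e ζ x y < ε}}

theorem gprod_symm {S : Type*} [MetricSpace S] (e u v : S) : gprod e u v = gprod e v u := by
  unfold gprod
  rw [dist_comm u v]
  ring

theorem IsGeodesicSegment.dist_add {S : Type*} [MetricSpace S] {Γ : Set S} {u v a : S}
    (h : IsGeodesicSegment Γ u v) (ha : a ∈ Γ) : dist u a + dist a v = dist u v := by
  obtain ⟨γ, h0, h1, hiso, rfl⟩ := h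
  obtain ⟨t, ht, rfl⟩ := ha
  have hd : (0 : ℝ) ≤ dist u v := dist_nonneg
  have e1 := hiso 0 ⟨le_rfl, hd⟩ t ht
  have e2 := hiso t ht _ ⟨hd, le_rfl⟩
  rw [h0, zero_sub, abs_neg, abs_of_nonneg ht.1] at e1
  rw [h1, abs_sub_comm, abs_of_nonneg (sub_nonneg.2 ht.2)] at e2
  linarith

theorem IsGeodesicSegment.left_mem {S : Type*} [MetricSpace S] {Γ : Set S} {u v : S}
    (h : IsGeodesicSegment Γ u v) : u ∈ Γ := by
  obtain ⟨γ, h0, h1, hiso, rfl⟩ := h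
  exact ⟨0, ⟨le_rfl, dist_nonneg⟩, h0⟩

theorem IsGeodesicSegment.right_mem {S : Type*} [MetricSpace S] {Γ : Set S} {u v : S}
    (h : IsGeodesicSegment Γ u v) : v ∈ Γ := by
  obtain ⟨γ, h0, h1, hiso, rfl⟩ := h
  exact ⟨dist u v, ⟨dist_nonneg, le_rfl⟩, h1⟩

theorem IsGeodesicSegment.isPreconnected {S : Type*} [MetricSpace S] {Γ : Set S} {u v : S}
    (h : IsGeodesicSegment Γ u v) : IsPreconnected Γ := by
  obtain ⟨γ, h0, h1, hiso, rfl⟩ := h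
  refine isPreconnected_Icc.image γ ?_
  have : LipschitzOnWith 1 γ (Set.Icc (0 : ℝ) (dist u v)) :=
    LipschitzOnWith.of_dist_le_mul fun s hs t ht => by
      rw [hiso s hs t ht, Real.dist_eq]
      simp
  exact this.continuousOn

theorem IsGeodesicSegment.gprod_le_dist {S : Type*} [MetricSpace S] {Γ : Set S} {u v a : S}
    (h : IsGeodesicSegment Γ u v) (ha : a ∈ Γ) (e : S) : gprod e u v ≤ dist a e := by
  have h1 := h.dist_add ha
  have h2 := dist_triangle u a e
  have h3 := dist_triangle v a e
  rw [dist_comm v a] at h3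
  unfold gprod
  linarith

/-- Since `(a·u) + (a·v) = d(a,e) + (u·v)` for `a ∈ [u,v]` and `(a·v) ≤ d(a,e)`, the product
with an endpoint is at least `(u·v)`. -/
theorem IsGeodesicSegment.gprod_le_gprod {S : Type*} [MetricSpace S] {Γ : Set S} {u v a : S}
    (h : IsGeodesicSegment Γ u v) (ha : a ∈ Γ) (e : S) : gprod e u v ≤ gprod e a u := by
  have h1 := h.dist_add ha
  have h2 := dist_triangle v a e
  rw [dist_comm v a] at h2
  unfold gprod
  rw [dist_comm a u]
  linarith

theorem slim_thickening {S : Type*} [MetricSpace S] {δ D : ℝ} (hD : δ < D)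
    (hhyp : DeltaHyperbolic S δ) {x y z : S} {Γ₁ Γ₂ Γ₃ : Set S}
    (h₁ : IsGeodesicSegment Γ₁ x y) (h₂ : IsGeodesicSegment Γ₂ y z)
    (h₃ : IsGeodesicSegment Γ₃ z x) :
    Γ₁ ⊆ Metric.thickening D Γ₂ ∪ Metric.thickening D Γ₃ := by
  intro p hp
  have h := (hhyp x y z Γ₁ Γ₂ Γ₃ h₁ h₂ h₃ p hp).trans_lt hD
  rw [Metric.infDist_lt_iff ⟨y, Or.inl h₂.left_mem⟩] at h
  obtain ⟨q, hq | hq, hpq⟩ := h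
  · exact Or.inl (Metric.mem_thickening_iff.2 ⟨q, hq, hpq⟩)
  · exact Or.inr (Metric.mem_thickening_iff.2 ⟨q, hq, hpq⟩)

theorem exists_near_basepoint {S : Type*} [MetricSpace S] {δ D : ℝ} (hD : δ < D) (hD0 : 0 < D)
    (hgeo : GeodesicSpace S) (hhyp : DeltaHyperbolic S δ) (e : S) {u v : S} {Γ : Set S}
    (h : IsGeodesicSegment Γ u v) : ∃ p ∈ Γ, dist p e ≤ gprod e u v + 2 * D := by
  obtain ⟨A, hA⟩ := hgeo v e
  obtain ⟨B, hB⟩ := hgeo e u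
  -- The open `D`-neighbourhoods of the other two sides cover the connected set `Γ` and both
  -- meet it, so some point of `Γ` lies in both.
  obtain ⟨p, hp, hpA, hpB⟩ := h.isPreconnected _ _ Metric.isOpen_thickening
    Metric.isOpen_thickening (slim_thickening hD hhyp h hA hB)
    ⟨v, h.right_mem, Metric.self_subset_thickening hD0 _ hA.left_mem⟩
    ⟨u, h.left_mem, Metric.self_subset_thickening hD0 _ hB.right_mem⟩
  obtain ⟨q, hq, hpq⟩ := Metric.mem_thickening_iff.1 hpA
  obtain ⟨r, hr, hpr⟩ := Metric.mem_thickening_iff.1 hpB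
  refine ⟨p, hp, ?_⟩
  have e1 := h.dist_add hp
  have e2 := hA.dist_add hq
  have e3 := hB.dist_add hr
  have t1 := dist_triangle p q e
  have t2 := dist_triangle p r e
  have t3 := dist_triangle p q v
  have t4 := dist_triangle p r u
  have c1 := dist_comm q v
  have c2 := dist_comm r e
  have c3 := dist_comm p u
  have c4 := dist_comm e u
  unfold gprod
  linarith

/-- The four-point inequality for Gromov products. -/
theorem gprod_ge_min {S : Type*} [MetricSpace S] {δ D : ℝ} (hD : δ < D) (hD0 : 0 < D)
    (hgeo : GeodesicSpace S) (hhyp : DeltaHyperbolic S δ) {e u v w : S} {c : ℝ}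
    (huv : c ≤ gprod e u v) (hvw : c ≤ gprod e v w) : c - 3 * D ≤ gprod e u w := by
  obtain ⟨Γ, h⟩ := hgeo u w
  obtain ⟨A, hA⟩ := hgeo w v
  obtain ⟨B, hB⟩ := hgeo v u
  obtain ⟨p, hp, hpe⟩ := exists_near_basepoint hD hD0 hgeo hhyp e h
  rw [gprod_symm] at huv hvw
  rcases slim_thickening hD hhyp h hA hB hp with hp | hp
  · obtain ⟨q, hq, hpq⟩ := Metric.mem_thickening_iff.1 hp
    have h1 := hA.gprod_le_dist hq e
    have h2 := dist_triangle_left q e p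
    linarith
  · obtain ⟨q, hq, hpq⟩ := Metric.mem_thickening_iff.1 hp
    have h1 := hB.gprod_le_dist hq e
    have h2 := dist_triangle_left q e p
    linarith

theorem eventually_gprod_of_mem_UK {S : Type*} [MetricSpace S] {e u : S} {K : ℝ}
    {x : GBoundary S e} (hu : u ∈ UK e K x) {s : ℕ → S} (hs : TendstoBd e s x) :
    ∀ᶠ n in Filter.atTop, K < gprod e u (s n) := by
  have h : (K : EReal) < Filter.liminf (fun n => (gprod e u (s n) : EReal)) Filter.atTop :=
    lt_of_lt_of_le hu (sInf_le ⟨s, hs, rfl⟩)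
  filter_upwards [Filter.eventually_lt_of_lt_liminf h] with n hn
  exact_mod_cast hn

/-- Geodesics with endpoints in `U_K(x)` stay far from `e` and close to `x`. -/
theorem geodesic_near_boundary {S : Type*} [MetricSpace S] {δ D : ℝ} (hD : δ < D) (hD0 : 0 < D)
    (hgeo : GeodesicSpace S) (hhyp : DeltaHyperbolic S δ) {e u₁ u₂ a : S} {K : ℝ}
    {x : GBoundary S e} (h₁ : u₁ ∈ UK e K x) (h₂ : u₂ ∈ UK e K x) {s : ℕ → S}
    (hs : TendstoBd e s x) {Γ : Set S} (hΓ : IsGeodesicSegment Γ u₁ u₂) (ha : a ∈ Γ) :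
    ∀ᶠ n in Filter.atTop, K - 3 * D ≤ dist a e ∧ K - 6 * D ≤ gprod e a (s n) := by
  filter_upwards [eventually_gprod_of_mem_UK h₁ hs, eventually_gprod_of_mem_UK h₂ hs]
    with n hn₁ hn₂
  have h12 : K - 3 * D ≤ gprod e u₁ u₂ :=
    gprod_ge_min hD hD0 hgeo hhyp hn₁.le (by rw [gprod_symm]; exact hn₂.le)
  refine ⟨h12.trans (hΓ.gprod_le_dist ha e), ?_⟩
  have h := gprod_ge_min hD hD0 hgeo hhyp (h12.trans (hΓ.gprod_le_gprod ha e))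
    (show K - 3 * D ≤ gprod e u₁ (s n) by linarith)
  linarith

/-- For distinct boundary points `x ≠ y` and every `R > 0` there is
`K > 0` such that geodesics between points of `U_K(x)` stay at distance `> R` from
geodesics between points of `U_K(y)`. -/
theorem statement16 {S : Type*} [MetricSpace S] (δ : ℝ) (hδ : 0 ≤ δ)
    (hgeo : GeodesicSpace S) (hhyp : DeltaHyperbolic S δ) (e : S)
    (x y : GBoundary S e) (hxy : x ≠ y) :
    ∀ R : ℝ, 0 < R → ∃ K : ℝ, 0 < K ∧
      ∀ u₁ u₂ v₁ v₂ : S, u₁ ∈ UK e K x → u₂ ∈ UK e K x → v₁ ∈ UK e K y → v₂ ∈ UK e K y →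
        ∀ Γ Δ : Set S, IsGeodesicSegment Γ u₁ u₂ → IsGeodesicSegment Δ v₁ v₂ →
          ∀ a ∈ Γ, ∀ b ∈ Δ, R < dist a b := by
  intro R hR
  obtain ⟨⟨s, hs⟩, rfl⟩ := Quot.exists_rep x
  obtain ⟨⟨t, ht⟩, rfl⟩ := Quot.exists_rep y
  have hne : ¬ Filter.Tendsto (fun n => gprod e (s n) (t n)) Filter.atTop Filter.atTop :=
    fun h => hxy (Quot.sound h)
  rw [Filter.tendsto_atTop] at hne
  push Not at hne
  obtain ⟨M, hM⟩ := hne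
  have hD : δ < δ + 1 := by linarith
  have hD0 : 0 < δ + 1 := by linarith
  refine ⟨|M| + 12 * (δ + 1) + R, by positivity, ?_⟩
  intro u₁ u₂ v₁ v₂ hu₁ hu₂ hv₁ hv₂ Γ Δ hΓ hΔ a ha b hb
  by_contra hab
  rw [not_lt] at hab
  obtain ⟨n, hnM, ⟨hae, has⟩, hbe, hbt⟩ := (hM.and_eventually
    ((geodesic_near_boundary hD hD0 hgeo hhyp hu₁ hu₂ ⟨hs, rfl⟩ hΓ ha).and
      (geodesic_near_boundary hD hD0 hgeo hhyp hv₁ hv₂ ⟨ht, rfl⟩ hΔ hb))).exists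
  have hMabs := le_abs_self M
  have hab' : |M| + 6 * (δ + 1) ≤ gprod e a b := by
    unfold gprod
    linarith
  rw [gprod_symm] at has
  have hsb := gprod_ge_min hD hD0 hgeo hhyp
    (show |M| + 6 * (δ + 1) ≤ gprod e (s n) a by linarith) hab'
  have hst := gprod_ge_min hD hD0 hgeo hhyp
    (show |M| + 3 * (δ + 1) ≤ gprod e (s n) b by linarith)
    (show |M| + 3 * (δ + 1) ≤ gprod e b (t n) by linarith)
  linarith
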